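/- arXiv:2505.16775 — 2 statements merged into one kernel-verified Lean document; each statement's English description precedes it below -/
import Mathlib

section
/- Let X = ℝ³ with the coordinatewise order and the norm ‖(x,y,z)‖ = max{ |x| + |z|/2, |y| + |z|/2, (2/3)|x| + (2/3)|y| + |z|/3, (5/6)(|x| + |y|) }. Then this is a lattice norm making X a Banach lattice, and the resulting lattice satisfies λ⁺(X) ≤ 4/3 and β(X) = 15/11; in particular λ⁺(X) < β(X). -/
/-- The norm on `ℝ³` from Example `counterexample`:
`‖(x,y,z)‖ = max {|x| + |z|/2, |y| + |z|/2, (2/3)|x| + (2/3)|y| + |z|/3, (5/6)(|x| + |y|)}`. -/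
noncomputable def exNorm (u : ℝ × ℝ × ℝ) : ℝ :=
  max (max (|u.1| + |u.2.2| / 2) (|u.2.1| + |u.2.2| / 2))
      (max (2 / 3 * |u.1| + 2 / 3 * |u.2.1| + |u.2.2| / 3) (5 / 6 * (|u.1| + |u.2.1|)))

/-- The lattice Schäffer constant of `(ℝ³, exNorm)` (coordinatewise order):
`λ⁺ = inf {max (‖u+v‖, ‖u−v‖) : u, v ∈ S⁺}`. -/
noncomputable def lambdaPlusEx : ℝ :=
  sInf {r : ℝ | ∃ u v : ℝ × ℝ × ℝ, 0 ≤ u ∧ 0 ≤ v ∧ exNorm u = 1 ∧ exNorm v = 1 ∧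
    r = max (exNorm (u + v)) (exNorm (u - v))}

/-- The parameter `β` of `(ℝ³, exNorm)`:
`β = inf {‖u ⊔ v‖ : u, v ∈ S⁺, u ⊓ v = 0}`. -/
noncomputable def betaEx : ℝ :=
  sInf {r : ℝ | ∃ u v : ℝ × ℝ × ℝ, 0 ≤ u ∧ 0 ≤ v ∧ exNorm u = 1 ∧ exNorm v = 1 ∧
    u ⊓ v = 0 ∧ r = exNorm (u ⊔ v)}

/-!
Every disjoint pair in `ℝ³` splits the three coordinates between its two members. If one member is
supported on the first axis (by symmetry also the second), a convex combination of the functionals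
`|x| + |z|/2` and `5/6 (|x| + |y|)` bounds the norm of the supremum below by `10/11 + 5/11`; if the
split separates the third axis from the `xy`-plane, the bound is `3/5 + 1`. Hence `β ≥ 15/11`, and
the first bound is attained where the two functionals agree. The Schäffer constant drops below
this because its pairs may overlap: a common third coordinate cancels in the difference.
-/

theorem exNorm_le_iff {x y z r : ℝ} : exNorm (x, y, z) ≤ r ↔
    (|x| + |z| / 2 ≤ r ∧ |y| + |z| / 2 ≤ r) ∧
      2 / 3 * |x| + 2 / 3 * |y| + |z| / 3 ≤ r ∧ 5 / 6 * (|x| + |y|) ≤ r := by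
  simp only [exNorm, max_le_iff]

theorem exNorm_bounds (x y z : ℝ) :
    (|x| + |z| / 2 ≤ exNorm (x, y, z) ∧ |y| + |z| / 2 ≤ exNorm (x, y, z)) ∧
      2 / 3 * |x| + 2 / 3 * |y| + |z| / 3 ≤ exNorm (x, y, z) ∧
        5 / 6 * (|x| + |y|) ≤ exNorm (x, y, z) :=
  exNorm_le_iff.1 le_rfl

theorem exNorm_nonneg (u : ℝ × ℝ × ℝ) : 0 ≤ exNorm u :=
  le_max_of_le_left (le_max_of_le_left (by positivity))

theorem exNorm_eq_zero {u : ℝ × ℝ × ℝ} : exNorm u = 0 ↔ u = 0 := by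
  refine ⟨fun hu ↦ ?_, by rintro rfl; simp [exNorm]⟩
  obtain ⟨x, y, z⟩ := u
  obtain ⟨⟨hx, hy⟩, -⟩ := exNorm_le_iff.1 hu.le
  have hx₀ : |x| = 0 := by linarith [abs_nonneg x, abs_nonneg z]
  have hy₀ : |y| = 0 := by linarith [abs_nonneg y, abs_nonneg z]
  have hz₀ : |z| = 0 := by linarith [abs_nonneg x, abs_nonneg z]
  simp only [abs_eq_zero] at hx₀ hy₀ hz₀
  simp only [hx₀, hy₀, hz₀, Prod.mk_zero_zero]

theorem exNorm_smul (a : ℝ) (u : ℝ × ℝ × ℝ) : exNorm (a • u) = |a| * exNorm u := by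
  simp only [exNorm, Prod.smul_fst, Prod.smul_snd, smul_eq_mul, abs_mul,
    mul_max_of_nonneg _ _ (abs_nonneg a)]
  ring_nf

theorem exNorm_add_le (u v : ℝ × ℝ × ℝ) : exNorm (u + v) ≤ exNorm u + exNorm v := by
  obtain ⟨x, y, z⟩ := u
  obtain ⟨x', y', z'⟩ := v
  obtain ⟨⟨_, _⟩, _, _⟩ := exNorm_bounds x y z
  obtain ⟨⟨_, _⟩, _, _⟩ := exNorm_bounds x' y' z'
  have hx := abs_add_le x x'
  have hy := abs_add_le y y'
  have hz := abs_add_le z z'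
  exact exNorm_le_iff.2 ⟨⟨by linarith, by linarith⟩, by linarith, by linarith⟩

theorem exNorm_le_exNorm_of_abs_le_abs {u v : ℝ × ℝ × ℝ} (h : |u| ≤ |v|) :
    exNorm u ≤ exNorm v := by
  obtain ⟨hx, hy, hz⟩ : |u.1| ≤ |v.1| ∧ |u.2.1| ≤ |v.2.1| ∧ |u.2.2| ≤ |v.2.2| := h
  unfold exNorm
  gcongr

theorem exNorm_swap (x y z : ℝ) : exNorm (y, x, z) = exNorm (x, y, z) := by
  simp only [exNorm, max_comm (|y| + |z| / 2), add_comm |y| |x|, add_comm (2 / 3 * |y|)]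

theorem exNorm_zero_left (y z : ℝ) : exNorm (0, y, z) = |y| + |z| / 2 := by
  have hy := abs_nonneg y
  have hz := abs_nonneg z
  refine le_antisymm (exNorm_le_iff.2 ?_) (exNorm_bounds 0 y z).1.2
  rw [abs_zero]
  exact ⟨⟨by linarith, le_rfl⟩, by linarith, by linarith⟩

theorem exNorm_zero_middle (x z : ℝ) : exNorm (x, 0, z) = |x| + |z| / 2 := by
  rw [exNorm_swap, exNorm_zero_left]

theorem exNorm_zero_right_le (x y : ℝ) : exNorm (x, y, 0) ≤ 5 / 3 * max |x| |y| := by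
  have hx := le_max_left |x| |y|
  have hy := le_max_right |x| |y|
  have hx₀ := abs_nonneg x
  rw [exNorm_le_iff, abs_zero]
  exact ⟨⟨by linarith, by linarith⟩, by linarith, by linarith⟩

theorem exNorm_first_axis_add_le (x y z : ℝ) :
    10 / 11 * exNorm (x, 0, 0) + 5 / 11 * exNorm (0, y, z) ≤ exNorm (x, y, z) := by
  obtain ⟨⟨hxz, -⟩, -, hxy⟩ := exNorm_bounds x y z
  calc 10 / 11 * exNorm (x, 0, 0) + 5 / 11 * exNorm (0, y, z)
      = 5 / 11 * (|x| + |z| / 2) + 6 / 11 * (5 / 6 * (|x| + |y|)) := by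
        rw [exNorm_zero_middle, exNorm_zero_left, abs_zero]; ring
    _ ≤ 5 / 11 * exNorm (x, y, z) + 6 / 11 * exNorm (x, y, z) := by gcongr
    _ = exNorm (x, y, z) := by ring

theorem exNorm_second_axis_add_le (x y z : ℝ) :
    10 / 11 * exNorm (0, y, 0) + 5 / 11 * exNorm (x, 0, z) ≤ exNorm (x, y, z) := by
  simpa only [exNorm_swap 0 y, exNorm_swap x 0, exNorm_swap x y] using
    exNorm_first_axis_add_le y x z

theorem exNorm_third_axis_add_le (x y z : ℝ) :
    3 / 5 * exNorm (x, y, 0) + exNorm (0, 0, z) ≤ exNorm (x, y, z) := by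
  obtain ⟨⟨hxz, hyz⟩, -⟩ := exNorm_bounds x y z
  calc 3 / 5 * exNorm (x, y, 0) + exNorm (0, 0, z)
      ≤ 3 / 5 * (5 / 3 * max |x| |y|) + |z| / 2 := by
        rw [exNorm_zero_left, abs_zero, zero_add]; gcongr; exact exNorm_zero_right_le x y
    _ = max (|x| + |z| / 2) (|y| + |z| / 2) := by rw [max_add_add_right]; ring
    _ ≤ exNorm (x, y, z) := max_le hxz hyz

theorem le_exNorm_sup_of_inf_eq_zero {u v : ℝ × ℝ × ℝ} (hu : exNorm u = 1) (hv : exNorm v = 1)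
    (huv : u ⊓ v = 0) : 15 / 11 ≤ exNorm (u ⊔ v) := by
  wlog hu_third : u.2.2 = 0 generalizing u v
  · have hv_third : v.2.2 = 0 :=
      (min_eq_iff.1 (congrArg (·.2.2) huv)).elim (fun h ↦ absurd h.1 hu_third) And.left
    simpa only [sup_comm] using this hv hu (by rwa [inf_comm]) hv_third
  have hsup : u ⊔ v = u + v := by simpa only [huv, zero_add] using inf_add_sup u v
  have hfirst : u.1 = 0 ∨ v.1 = 0 :=
    (min_eq_iff.1 (congrArg (·.1) huv)).imp And.left And.left
  have hsecond : u.2.1 = 0 ∨ v.2.1 = 0 :=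
    (min_eq_iff.1 (congrArg (·.2.1) huv)).imp And.left And.left
  rw [hsup]
  obtain ⟨a, b, c⟩ := u
  obtain ⟨x, y, z⟩ := v
  dsimp only at hu_third hfirst hsecond
  subst hu_third
  rcases hfirst with rfl | rfl <;> rcases hsecond with rfl | rfl <;>
    simp only [Prod.mk_add_mk, zero_add, add_zero]
  · exact absurd hu (by simp [exNorm])
  · linarith [exNorm_second_axis_add_le x b z]
  · linarith [exNorm_first_axis_add_le a y z]
  · linarith [exNorm_third_axis_add_le a b z]

theorem lambdaPlusEx_le : lambdaPlusEx ≤ 4 / 3 := by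
  refine csInf_le ⟨0, ?_⟩
    ⟨(4 / 5, 0, 2 / 5), (0, 4 / 5, 2 / 5), ?_, ?_, ?_, ?_, ?_⟩
  · rintro _ ⟨u, v, -, -, -, -, rfl⟩
    exact le_max_of_le_left (exNorm_nonneg _)
  · norm_num [Prod.le_def]
  · norm_num [Prod.le_def]
  · norm_num [exNorm_zero_middle, abs_of_pos]
  · norm_num [exNorm_zero_left, abs_of_pos]
  · norm_num [exNorm, abs_of_pos]

theorem betaEx_eq : betaEx = 15 / 11 := by
  refine IsLeast.csInf_eq ⟨⟨(1, 0, 0), (0, 7 / 11, 8 / 11), ?_, ?_, ?_, ?_, ?_, ?_⟩, ?_⟩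
  · norm_num [Prod.le_def]
  · norm_num [Prod.le_def]
  · norm_num [exNorm_zero_middle]
  · norm_num [exNorm_zero_left, abs_of_pos]
  · norm_num [Prod.ext_iff]
  · norm_num [exNorm, abs_of_pos]
  · rintro _ ⟨u, v, -, -, hu, hv, huv, rfl⟩
    exact le_exNorm_sup_of_inf_eq_zero hu hv huv

/-- `exNorm` is a lattice norm on `ℝ³` (with coordinatewise order), making it
a Banach lattice, and the resulting lattice satisfies `λ⁺ ≤ 4/3` and `β = 15/11`;
in particular `λ⁺ < β`. -/
theorem stmt5 :
    (∀ u : ℝ × ℝ × ℝ, exNorm u = 0 ↔ u = 0) ∧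
    (∀ (a : ℝ) (u : ℝ × ℝ × ℝ), exNorm (a • u) = |a| * exNorm u) ∧
    (∀ u v : ℝ × ℝ × ℝ, exNorm (u + v) ≤ exNorm u + exNorm v) ∧
    (∀ u v : ℝ × ℝ × ℝ, |u| ≤ |v| → exNorm u ≤ exNorm v) ∧
    lambdaPlusEx ≤ 4 / 3 ∧ betaEx = 15 / 11 ∧ lambdaPlusEx < betaEx := by
  have hlt : lambdaPlusEx < betaEx :=
    lambdaPlusEx_le.trans_lt (by rw [betaEx_eq]; norm_num)
  exact ⟨fun _ ↦ exNorm_eq_zero, exNorm_smul, exNorm_add_le,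
    fun _ _ ↦ exNorm_le_exNorm_of_abs_le_abs, lambdaPlusEx_le, betaEx_eq, hlt⟩
end

section
/- Let p ∈ [1, ∞) and let (E, Σ, μ) be a measure space containing two disjoint measurable sets of positive finite measure. Then the Banach lattice X = L_p(E, Σ, μ) of real-valued p-integrable functions satisfies λ⁺(X) = β(X) = 2^{1/p}. -/
/-- The lattice Schäffer constant of a Banach lattice `X`:
`λ⁺(X) = inf {max (‖x+y‖, ‖x−y‖) : x, y ∈ S_X⁺}`. -/
noncomputable def lambdaPlus (X : Type*) [NormedAddCommGroup X] [Lattice X] : ℝ :=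
  sInf {r : ℝ | ∃ x y : X, 0 ≤ x ∧ 0 ≤ y ∧ ‖x‖ = 1 ∧ ‖y‖ = 1 ∧ r = max ‖x + y‖ ‖x - y‖}

/-- The parameter `β(X) = inf {‖x ⊔ y‖ : x, y ∈ S_X⁺, x ⊓ y = 0}`. -/
noncomputable def betaParam (X : Type*) [NormedAddCommGroup X] [Lattice X] : ℝ :=
  sInf {r : ℝ | ∃ x y : X, 0 ≤ x ∧ 0 ≤ y ∧ ‖x‖ = 1 ∧ ‖y‖ = 1 ∧ x ⊓ y = 0 ∧ r = ‖x ⊔ y‖}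

/-- The Riesz angle `α(X) = sup {‖x ⊔ y‖ : x, y ∈ B_X⁺}`. -/
noncomputable def rieszAngle (X : Type*) [NormedAddCommGroup X] [Lattice X] : ℝ :=
  sSup {r : ℝ | ∃ x y : X, 0 ≤ x ∧ 0 ≤ y ∧ ‖x‖ ≤ 1 ∧ ‖y‖ ≤ 1 ∧ r = ‖x ⊔ y‖}

/-- The Schäffer constant `λ(X) = inf {max (‖x+y‖, ‖x−y‖) : x, y ∈ S_X}`. -/
noncomputable def schafferConst (X : Type*) [NormedAddCommGroup X] : ℝ :=
  sInf {r : ℝ | ∃ x y : X, ‖x‖ = 1 ∧ ‖y‖ = 1 ∧ r = max ‖x + y‖ ‖x - y‖}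

/-- The James constant `J(X) = sup {min (‖x+y‖, ‖x−y‖) : x, y ∈ S_X}`. -/
noncomputable def jamesConst (X : Type*) [NormedAddCommGroup X] : ℝ :=
  sSup {r : ℝ | ∃ x y : X, ‖x‖ = 1 ∧ ‖y‖ = 1 ∧ r = min ‖x + y‖ ‖x - y‖}

open MeasureTheory

/-!
For `x ⊓ y = 0` we have `x ⊔ y = x + y = |x - y|`, so every competitor for `β(X)` is one for `λ⁺(X)`
and `λ⁺(X) ≤ β(X)`. In `L_p` the inequality `a ^ p + b ^ p ≤ (a + b) ^ p` integrates to
`‖x‖ ^ p + ‖y‖ ^ p ≤ ‖x + y‖ ^ p` for `x, y ≥ 0`, hence `2 ^ (1 / p) ≤ λ⁺(X)`. For disjoint `x, y`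
this is an equality, so normalized indicators of two disjoint sets give `β(X) ≤ 2 ^ (1 / p)`.
-/

open scoped ENNReal

lemma nonneg_of_inf_eq_zero {L : Type*} [Zero L] [Lattice L] {x y : L} (hxy : x ⊓ y = 0) :
    0 ≤ x ∧ 0 ≤ y :=
  le_inf_iff.mp hxy.ge

lemma sup_eq_add_of_inf_eq_zero {G : Type*} [AddCommGroup G] [Lattice G] [AddLeftMono G]
    {x y : G} (hxy : x ⊓ y = 0) : x ⊔ y = x + y := by
  simpa only [hxy, zero_add] using inf_add_sup x y

lemma indicator_inf_indicator_of_disjoint {ι L : Type*} [Lattice L] [Zero L] {s t : Set ι}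
    (hst : Disjoint s t) {f g : ι → L} (hf : 0 ≤ f) (hg : 0 ≤ g) :
    s.indicator f ⊓ t.indicator g = 0 := by
  funext a
  by_cases has : a ∈ s
  · simpa [has, hst.notMem_of_mem_left has] using hf a
  · simpa [has] using Set.indicator_apply_nonneg fun _ ↦ hg a

section NormedLattice

variable {X : Type*} [NormedAddCommGroup X] [Lattice X]

lemma norm_sub_eq_norm_sup_of_inf_eq_zero [HasSolidNorm X] [IsOrderedAddMonoid X]
    {x y : X} (hxy : x ⊓ y = 0) : ‖x - y‖ = ‖x ⊔ y‖ := by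
  rw [norm_sub_rev, ← norm_abs_eq_norm (y - x), ← sup_sub_inf_eq_abs_sub, hxy, sub_zero]

lemma max_norm_add_norm_sub_of_inf_eq_zero [HasSolidNorm X] [IsOrderedAddMonoid X]
    {x y : X} (hxy : x ⊓ y = 0) : max ‖x + y‖ ‖x - y‖ = ‖x ⊔ y‖ := by
  rw [norm_sub_eq_norm_sup_of_inf_eq_zero hxy, ← sup_eq_add_of_inf_eq_zero hxy, max_self]

lemma betaParam_le_norm_sup {x y : X} (hx : ‖x‖ = 1) (hy : ‖y‖ = 1) (hxy : x ⊓ y = 0) :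
    betaParam X ≤ ‖x ⊔ y‖ := by
  obtain ⟨hx₀, hy₀⟩ := nonneg_of_inf_eq_zero hxy
  refine csInf_le ⟨0, ?_⟩ ⟨x, y, hx₀, hy₀, hx, hy, hxy, rfl⟩
  rintro _ ⟨u, v, -, -, -, -, -, rfl⟩
  exact norm_nonneg _

lemma lambdaPlus_le_betaParam [HasSolidNorm X] [IsOrderedAddMonoid X]
    (hpair : ∃ x y : X, ‖x‖ = 1 ∧ ‖y‖ = 1 ∧ x ⊓ y = 0) : lambdaPlus X ≤ betaParam X := by
  obtain ⟨x, y, hx, hy, hxy⟩ := hpair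
  obtain ⟨hx₀, hy₀⟩ := nonneg_of_inf_eq_zero hxy
  refine csInf_le_csInf ⟨0, ?_⟩ ⟨_, x, y, hx₀, hy₀, hx, hy, hxy, rfl⟩ ?_
  · rintro _ ⟨u, v, -, -, -, -, rfl⟩
    exact le_max_of_le_left (norm_nonneg _)
  · rintro _ ⟨u, v, hu₀, hv₀, hu, hv, huv, rfl⟩
    exact ⟨u, v, hu₀, hv₀, hu, hv, (max_norm_add_norm_sub_of_inf_eq_zero huv).symm⟩

lemma two_rpow_le_lambdaPlus_of_superadditive {p : ℝ} (hp : 0 < p)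
    (hunit : ∃ x : X, 0 ≤ x ∧ ‖x‖ = 1)
    (hsuper : ∀ x y : X, 0 ≤ x → 0 ≤ y → ‖x‖ ^ p + ‖y‖ ^ p ≤ ‖x + y‖ ^ p) :
    (2 : ℝ) ^ (1 / p) ≤ lambdaPlus X := by
  obtain ⟨x, hx₀, hx⟩ := hunit
  refine le_csInf ⟨_, x, x, hx₀, hx₀, hx, hx, rfl⟩ ?_
  rintro _ ⟨u, v, hu₀, hv₀, hu, hv, rfl⟩
  have two_le : 2 ≤ ‖u + v‖ ^ p := by
    simpa only [hu, hv, Real.one_rpow, one_add_one_eq_two] using hsuper u v hu₀ hv₀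
  rw [one_div]
  exact le_max_of_le_left
    ((Real.rpow_inv_le_iff_of_pos zero_le_two (norm_nonneg _) hp).mpr two_le)

end NormedLattice

section Lp

variable {E F : Type*} [MeasurableSpace E] {μ : Measure E} [NormedAddCommGroup F] {p : ℝ≥0∞}

lemma integrable_norm_rpow_Lp (hp₀ : p ≠ 0) (hp : p ≠ ∞) (f : Lp F p μ) :
    Integrable (fun a ↦ ‖f a‖ ^ p.toReal) μ :=
  (Lp.memLp f).integrable_norm_rpow hp₀ hp

lemma norm_rpow_Lp_eq_integral (hp₀ : p ≠ 0) (hp : p ≠ ∞) (f : Lp F p μ) :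
    ‖f‖ ^ p.toReal = ∫ a, ‖f a‖ ^ p.toReal ∂μ := by
  have hintegral : 0 ≤ ∫ a, ‖f a‖ ^ p.toReal ∂μ := integral_nonneg fun _ ↦ by positivity
  rw [Lp.norm_def, (Lp.memLp f).eLpNorm_eq_integral_rpow_norm hp₀ hp,
    ENNReal.toReal_ofReal (by positivity),
    Real.rpow_inv_rpow hintegral (ENNReal.toReal_ne_zero.mpr ⟨hp₀, hp⟩)]

lemma norm_rpow_add_norm_rpow_le_Lp (hp₁ : 1 ≤ p) (hp : p ≠ ∞) {f g : Lp ℝ p μ}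
    (hf : 0 ≤ f) (hg : 0 ≤ g) :
    ‖f‖ ^ p.toReal + ‖g‖ ^ p.toReal ≤ ‖f + g‖ ^ p.toReal := by
  have hp₀ : p ≠ 0 := (one_pos.trans_le hp₁).ne'
  have hp_real : 1 ≤ p.toReal := ENNReal.toReal_mono hp hp₁
  have integrable := integrable_norm_rpow_Lp (F := ℝ) (μ := μ) hp₀ hp
  simp only [norm_rpow_Lp_eq_integral hp₀ hp]
  rw [← integral_add (integrable f) (integrable g)]
  refine integral_mono_ae ((integrable f).add (integrable g)) (integrable _) ?_
  filter_upwards [(Lp.coeFn_nonneg f).mpr hf, (Lp.coeFn_nonneg g).mpr hg, Lp.coeFn_add f g]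
    with a hfa hga hadd
  rw [hadd, Pi.add_apply, Real.norm_of_nonneg hfa, Real.norm_of_nonneg hga,
    Real.norm_of_nonneg (add_nonneg hfa hga)]
  exact Real.add_rpow_le_rpow_add hfa hga hp_real

lemma norm_add_rpow_Lp_of_ae_eq_zero_or_eq_zero (hp₀ : p ≠ 0) (hp : p ≠ ∞) {f g : Lp F p μ}
    (hfg : ∀ᵐ a ∂μ, f a = 0 ∨ g a = 0) :
    ‖f + g‖ ^ p.toReal = ‖f‖ ^ p.toReal + ‖g‖ ^ p.toReal := by
  have hp_real : p.toReal ≠ 0 := ENNReal.toReal_ne_zero.mpr ⟨hp₀, hp⟩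
  simp only [norm_rpow_Lp_eq_integral hp₀ hp]
  rw [← integral_add (integrable_norm_rpow_Lp hp₀ hp f) (integrable_norm_rpow_Lp hp₀ hp g)]
  refine integral_congr_ae ?_
  filter_upwards [hfg, Lp.coeFn_add f g] with a hfga hadd
  rw [hadd, Pi.add_apply]
  rcases hfga with hfa | hga
  · simp [hfa, hp_real]
  · simp [hga, hp_real]

lemma ae_eq_zero_or_eq_zero_of_Lp_inf_eq_zero {f g : Lp ℝ p μ} (hfg : f ⊓ g = 0) :
    ∀ᵐ a ∂μ, f a = 0 ∨ g a = 0 := by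
  have hinf := Lp.coeFn_inf f g
  rw [hfg] at hinf
  filter_upwards [hinf, Lp.coeFn_zero ℝ p μ] with a hinfa hzero
  have hmin : min (f a) (g a) = 0 := hinfa.symm.trans hzero
  exact (min_choice (f a) (g a)).imp (·.symm.trans hmin) (·.symm.trans hmin)

lemma norm_sup_Lp_eq_two_rpow_of_inf_eq_zero (hp₀ : p ≠ 0) (hp : p ≠ ∞) {f g : Lp ℝ p μ}
    (hf : ‖f‖ = 1) (hg : ‖g‖ = 1) (hfg : f ⊓ g = 0) :
    ‖f ⊔ g‖ = (2 : ℝ) ^ (1 / p.toReal) := by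
  have rpow_eq := norm_add_rpow_Lp_of_ae_eq_zero_or_eq_zero hp₀ hp
    (ae_eq_zero_or_eq_zero_of_Lp_inf_eq_zero hfg)
  rw [hf, hg, Real.one_rpow, one_add_one_eq_two] at rpow_eq
  rw [sup_eq_add_of_inf_eq_zero hfg, one_div]
  exact (Real.eq_rpow_inv ENNReal.toReal_nonneg zero_le_two
    (ENNReal.toReal_ne_zero.mpr ⟨hp₀, hp⟩)).mpr rpow_eq

lemma indicatorConstLp_inf_indicatorConstLp_of_disjoint [Lattice F] [HasSolidNorm F]
    [IsOrderedAddMonoid F] {s t : Set E} (hs : MeasurableSet s) (ht : MeasurableSet t)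
    (hμs : μ s ≠ ∞) (hμt : μ t ≠ ∞) (hst : Disjoint s t) {c d : F} (hc : 0 ≤ c) (hd : 0 ≤ d) :
    indicatorConstLp p hs hμs c ⊓ indicatorConstLp p ht hμt d = 0 := by
  apply Lp.ext
  calc ⇑(indicatorConstLp p hs hμs c ⊓ indicatorConstLp p ht hμt d)
      =ᵐ[μ] ⇑(indicatorConstLp p hs hμs c) ⊓ ⇑(indicatorConstLp p ht hμt d) := Lp.coeFn_inf _ _
    _ =ᵐ[μ] s.indicator (fun _ ↦ c) ⊓ t.indicator (fun _ ↦ d) :=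
      indicatorConstLp_coeFn.inf indicatorConstLp_coeFn
    _ = 0 := indicator_inf_indicator_of_disjoint hst (fun _ ↦ hc) (fun _ ↦ hd)
    _ =ᵐ[μ] ⇑(0 : Lp F p μ) := (Lp.coeFn_zero F p μ).symm

lemma norm_indicatorConstLp_inv_rpow (hp₀ : p ≠ 0) (hp : p ≠ ∞) {s : Set E}
    (hs : MeasurableSet s) (hμs₀ : μ s ≠ 0) (hμs : μ s ≠ ∞) :
    ‖indicatorConstLp p hs hμs (μ.real s ^ (1 / p.toReal))⁻¹‖ = 1 := by
  have rpow_pos : 0 < μ.real s ^ (1 / p.toReal) :=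
    Real.rpow_pos_of_pos (ENNReal.toReal_pos hμs₀ hμs) _
  rw [norm_indicatorConstLp hp₀ hp, Real.norm_of_nonneg (inv_nonneg.mpr rpow_pos.le),
    inv_mul_cancel₀ rpow_pos.ne']

lemma exists_Lp_norm_eq_one_inf_eq_zero (hp₀ : p ≠ 0) (hp : p ≠ ∞) {s t : Set E}
    (hs : MeasurableSet s) (ht : MeasurableSet t) (hst : Disjoint s t)
    (hμs₀ : μ s ≠ 0) (hμs : μ s ≠ ∞) (hμt₀ : μ t ≠ 0) (hμt : μ t ≠ ∞) :
    ∃ f g : Lp ℝ p μ, ‖f‖ = 1 ∧ ‖g‖ = 1 ∧ f ⊓ g = 0 :=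
  ⟨_, _, norm_indicatorConstLp_inv_rpow hp₀ hp hs hμs₀ hμs,
    norm_indicatorConstLp_inv_rpow hp₀ hp ht hμt₀ hμt,
    indicatorConstLp_inf_indicatorConstLp_of_disjoint hs ht hμs hμt hst
      (by positivity) (by positivity)⟩

end Lp

/-- for `p ∈ [1, ∞)` and a measure space containing two disjoint measurable
sets of positive finite measure, `λ⁺(L_p(μ)) = β(L_p(μ)) = 2^(1/p)`. -/
theorem stmt6 {E : Type*} [MeasurableSpace E] (μ : Measure E) (p : ℝ) (hp : 1 ≤ p)
    (h : ∃ A B : Set E, MeasurableSet A ∧ MeasurableSet B ∧ Disjoint A B ∧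
      0 < μ A ∧ μ A < ⊤ ∧ 0 < μ B ∧ μ B < ⊤) :
    letI : Fact (1 ≤ ENNReal.ofReal p) := ⟨ENNReal.one_le_ofReal.mpr hp⟩
    lambdaPlus (Lp ℝ (ENNReal.ofReal p) μ) = (2 : ℝ) ^ (1 / p) ∧
    betaParam (Lp ℝ (ENNReal.ofReal p) μ) = (2 : ℝ) ^ (1 / p) := by
  have : Fact (1 ≤ ENNReal.ofReal p) := ⟨ENNReal.one_le_ofReal.mpr hp⟩
  have hp₀ : ENNReal.ofReal p ≠ 0 := by simpa using one_pos.trans_le hp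
  have hp_top : ENNReal.ofReal p ≠ ∞ := ENNReal.ofReal_ne_top
  have hp_real : (ENNReal.ofReal p).toReal = p := ENNReal.toReal_ofReal (zero_le_one.trans hp)
  obtain ⟨A, B, hA, hB, hAB, hA₀, hA_top, hB₀, hB_top⟩ := h
  obtain ⟨x, y, hx, hy, hxy⟩ := exists_Lp_norm_eq_one_inf_eq_zero hp₀ hp_top hA hB hAB
    hA₀.ne' hA_top.ne hB₀.ne' hB_top.ne
  have lower : (2 : ℝ) ^ (1 / p) ≤ lambdaPlus (Lp ℝ (ENNReal.ofReal p) μ) :=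
    two_rpow_le_lambdaPlus_of_superadditive (one_pos.trans_le hp)
      ⟨x, (nonneg_of_inf_eq_zero hxy).1, hx⟩ fun u v hu hv ↦ by
        simpa only [hp_real] using
          norm_rpow_add_norm_rpow_le_Lp Fact.out hp_top hu hv
  have middle : lambdaPlus (Lp ℝ (ENNReal.ofReal p) μ) ≤ betaParam (Lp ℝ (ENNReal.ofReal p) μ) :=
    lambdaPlus_le_betaParam ⟨x, y, hx, hy, hxy⟩
  have upper : betaParam (Lp ℝ (ENNReal.ofReal p) μ) ≤ (2 : ℝ) ^ (1 / p) :=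
    (betaParam_le_norm_sup hx hy hxy).trans_eq <| by
      rw [norm_sup_Lp_eq_two_rpow_of_inf_eq_zero hp₀ hp_top hx hy hxy, hp_real]
  exact ⟨(middle.trans upper).antisymm lower, upper.antisymm (lower.trans middle)⟩
end
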